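/- arXiv:1906.00020 — 3 statements merged into one kernel-verified Lean document; each statement's English description precedes it below -/
import Mathlib

section
/- Let m > 0 have k-sandwiching sequence (A_{a_i} b_i)_{i=1}^n with sandwiching values (m_i)_{i=0}^n. Then: (1) for every i with 0 ≤ i < n, m_i ≤ b_{i+1} < m_{i+1}; (2) for every i with 0 < i < n, a_i > a_{i+1}. -/
/-- The base-`k` Ackermann function `A_a(k, b)`:
`A_0(k, b) = k ^ b` and `A_{a+1}(k, b) = A_a^k(k, A_{a+1}(k, b-1))`,
with the auxiliary value `A_{a+1}(k, -1) = 1`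
(equivalently, `A_{a+1}(k, b) = (A_a^k)^[b+1] (1)`). -/
def Ack (k : ℕ) : ℕ → ℕ → ℕ
  | 0, b => k ^ b
  | a + 1, b => ((Ack k a)^[k])^[b + 1] 1

/-- `IsSandwich k m n a b ms` says that `(A_{a i}(k, b i))_{i=1}^n` is a
`k`-sandwiching sequence for `m`, with sandwiching values `(ms i)_{i=0}^n`:
`ms 0 = 0`; for each `i < n`, `A_{a (i+1)} (ms i) ≤ m < A_{a (i+1) + 1} (ms i)`,
`A_{a (i+1)} (b (i+1)) ≤ m < A_{a (i+1)} (b (i+1) + 1)`, and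
`ms (i+1) = A_{a (i+1)} (b (i+1))`; and `A_0 (ms n) > m`. -/
structure IsSandwich (k m n : ℕ) (a b ms : ℕ → ℕ) : Prop where
  ms_zero : ms 0 = 0
  idx_lo : ∀ i < n, Ack k (a (i + 1)) (ms i) ≤ m
  idx_hi : ∀ i < n, m < Ack k (a (i + 1) + 1) (ms i)
  arg_lo : ∀ i < n, Ack k (a (i + 1)) (b (i + 1)) ≤ m
  arg_hi : ∀ i < n, m < Ack k (a (i + 1)) (b (i + 1) + 1)
  ms_succ : ∀ i < n, ms (i + 1) = Ack k (a (i + 1)) (b (i + 1))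
  halt : m < Ack k 0 (ms n)

/-!
Each `A_a` is inflationary, because iterating an inflationary map `n` times gains at least `n`.
Since `A_{a+1} x` is the iterate of `A_a` on `1` of length `k * (x + 1)`, it follows that `A_a x`
is strictly monotone in both `x` and `a`. Hence `A_{a_i} m_{i-1} ≤ m < A_{a_i} (b_i + 1)`
forces `m_{i-1} ≤ b_i`, and `b_i < A_{a_i} b_i = m_i`. Consequently
`A_{a_{i+1}} m_i ≤ m < A_{a_i} (b_i + 1) ≤ A_{a_i} m_i`, which forces `a_{i+1} < a_i`.
-/

theorem strictMono_iterate_of_forall_lt {α : Type*} [Preorder α] {f : α → α}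
    (hf : ∀ x, x < f x) (x : α) : StrictMono fun n => f^[n] x :=
  strictMono_nat_of_lt_succ fun n => by
    simpa only [Function.iterate_succ_apply'] using hf (f^[n] x)

theorem add_le_iterate_of_forall_lt {f : ℕ → ℕ} (hf : ∀ x, x < f x) (n x : ℕ) :
    n + x ≤ f^[n] x :=
  (strictMono_iterate_of_forall_lt hf x).add_le_nat n 0

namespace Ack

variable {k : ℕ}

theorem succ_eq_iterate (k a b : ℕ) : Ack k (a + 1) b = (Ack k a)^[k * (b + 1)] 1 := by
  rw [Function.iterate_mul, Ack]

theorem lt_apply (hk : 2 ≤ k) (a x : ℕ) : x < Ack k a x := by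
  induction a generalizing x with
  | zero => exact Nat.lt_pow_self hk
  | succ a ih =>
    calc
      x < x + 1 := x.lt_succ_self
      _ ≤ k * (x + 1) := Nat.le_mul_of_pos_left _ (by lia)
      _ ≤ k * (x + 1) + 1 := Nat.le_succ _
      _ ≤ (Ack k a)^[k * (x + 1)] 1 := add_le_iterate_of_forall_lt ih _ _
      _ = Ack k (a + 1) x := (succ_eq_iterate k a x).symm

theorem strictMono_right (hk : 2 ≤ k) : ∀ a, StrictMono (Ack k a)
  | 0 => pow_right_strictMono₀ hk
  | a + 1 => fun x y hxy => by
    have length_lt : k * (x + 1) < k * (y + 1) := by gcongr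
    simpa only [succ_eq_iterate] using
      strictMono_iterate_of_forall_lt (lt_apply hk a) 1 length_lt

theorem apply_succ_le_succ_apply (hk : 2 ≤ k) (a x : ℕ) : Ack k a (x + 1) ≤ Ack k (a + 1) x := by
  have length_le : x + 1 ≤ k * (x + 1) := Nat.le_mul_of_pos_left _ (by lia)
  calc
    Ack k a (x + 1) ≤ Ack k a ((Ack k a)^[x] 1) :=
      (strictMono_right hk a).monotone (add_le_iterate_of_forall_lt (lt_apply hk a) x 1)
    _ = (Ack k a)^[x + 1] 1 := (Function.iterate_succ_apply' _ _ _).symm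
    _ ≤ (Ack k a)^[k * (x + 1)] 1 :=
      (strictMono_iterate_of_forall_lt (lt_apply hk a) 1).monotone length_le
    _ = Ack k (a + 1) x := (succ_eq_iterate k a x).symm

theorem strictMono_left (hk : 2 ≤ k) (x : ℕ) : StrictMono fun a => Ack k a x :=
  strictMono_nat_of_lt_succ fun a =>
    (strictMono_right hk a x.lt_succ_self).trans_le (apply_succ_le_succ_apply hk a x)

end Ack

namespace IsSandwich

variable {k m n i : ℕ} {a b ms : ℕ → ℕ}

theorem ms_le_arg (hs : IsSandwich k m n a b ms) (hk : 2 ≤ k) (hi : i < n) :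
    ms i ≤ b (i + 1) :=
  Nat.le_of_lt_succ <|
    (Ack.strictMono_right hk _).lt_iff_lt.mp <| (hs.idx_lo i hi).trans_lt (hs.arg_hi i hi)

theorem arg_lt_ms (hs : IsSandwich k m n a b ms) (hk : 2 ≤ k) (hi : i < n) :
    b (i + 1) < ms (i + 1) :=
  (Ack.lt_apply hk _ _).trans_eq (hs.ms_succ i hi).symm

theorem lt_Ack_ms (hs : IsSandwich k m n a b ms) (hk : 2 ≤ k) (hi : i < n) :
    m < Ack k (a (i + 1)) (ms (i + 1)) :=
  (hs.arg_hi i hi).trans_le <| (Ack.strictMono_right hk _).monotone (hs.arg_lt_ms hk hi)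

theorem idx_succ_lt_idx (hs : IsSandwich k m n a b ms) (hk : 2 ≤ k) (hi : i + 1 < n) :
    a (i + 2) < a (i + 1) :=
  (Ack.strictMono_left hk _).lt_iff_lt.mp <|
    (hs.idx_lo (i + 1) hi).trans_lt (hs.lt_Ack_ms hk (Nat.lt_of_succ_lt hi))

end IsSandwich

theorem stmt_1 (k m n : ℕ) (a b ms : ℕ → ℕ) (hk : 2 ≤ k) (hm : 0 < m)
    (hs : IsSandwich k m n a b ms) :
    (∀ i < n, ms i ≤ b (i + 1) ∧ b (i + 1) < ms (i + 1)) ∧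
      (∀ i, 0 < i → i < n → a (i + 1) < a i) := by
  refine ⟨fun i hi => ⟨hs.ms_le_arg hk hi, hs.arg_lt_ms hk hi⟩, fun i hpos hi => ?_⟩
  obtain ⟨j, rfl⟩ := Nat.exists_eq_succ_of_ne_zero hpos.ne'
  exact hs.idx_succ_lt_idx hk hi
end

section
/- Let m ≡_k A_a b with k-sandwiching sequence (A_{a_i} b_i)_{i=1}^n and sandwiching values (m_i)_{i=0}^n, let j ≤ n, and let w = A_d e. Suppose that (1) A_d m_j ≤ w < A_{d+1} m_j, and (2) if j > 0 then w < A_{a_j}(b_j + 1). Then w ≡_k A_d e, and the k-sandwiching sequence of w is (A_{d_i} e_i)_{i=1}^{j+1}, where d_i = a_i and e_i = b_i for 1 ≤ i ≤ j, d_{j+1} = d, and e_{j+1} = e. -/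
/-- `NF k m a b c` says that `m ≡_k A_a b + c`, i.e. `m` has `k`-normal form
`A_a b + c` (so `m = A_a b + c` and the `k`-sandwiching sequence of `m` ends
with the pair `(a, b)`). -/
def NF (k m a b c : ℕ) : Prop :=
  m = Ack k a b + c ∧
    ∃ n as bs ms, 1 ≤ n ∧ IsSandwich k m n as bs ms ∧ a = as n ∧ b = bs n

/-!
Every value of `A_{a+1}` is a value of `A_a`, so a bound `A_c b ≤ m < A_a x` with `c ≤ a` upgrades
to `A_c (b + 1) ≤ A_a x`. Along a sandwiching sequence the indices `a_i` decrease strictly, hence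
the upper bounds `A_{a_i} (b_i + 1)` decrease weakly while the values `m_i` increase. Therefore any
`w` with `m_j ≤ w < A_{a_j} (b_j + 1)` passes through the same first `j` steps as `m`, after which
the bounds `A_d m_j ≤ w < A_{d+1} m_j` and `A_d e ≤ w < A_d (e + 1)` make `A_d e` the next step.
-/

section Ackermann

variable {k : ℕ}

theorem ack_succ_eq_iterate_mul (k a x : ℕ) :
    Ack k (a + 1) x = (Ack k a)^[k * (x + 1)] 1 := by
  rw [Ack, Function.iterate_mul]

theorem strictMono_ack_and_lt_ack (hk : 2 ≤ k) (a : ℕ) :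
    StrictMono (Ack k a) ∧ ∀ x, x < Ack k a x := by
  induction a with
  | zero =>
    have ack_zero : Ack k 0 = (k ^ ·) := funext fun x ↦ by rw [Ack]
    rw [ack_zero]
    exact ⟨pow_right_strictMono₀ hk, fun x ↦ Nat.lt_pow_self hk⟩
  | succ a ih =>
    have iterate_strictMono : StrictMono fun n ↦ (Ack k a)^[n] 1 :=
      ih.1.strictMono_iterate_of_lt_map (ih.2 1)
    refine ⟨fun x y hxy ↦ ?_, fun x ↦ ?_⟩
    · simp only [ack_succ_eq_iterate_mul]
      have exponent_lt : k * (x + 1) < k * (y + 1) := by gcongr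
      exact iterate_strictMono exponent_lt
    · rw [ack_succ_eq_iterate_mul]
      calc
        x < k * (x + 1) := by nlinarith
        _ ≤ (Ack k a)^[k * (x + 1)] 1 := iterate_strictMono.le_apply

theorem strictMono_ack (hk : 2 ≤ k) (a : ℕ) : StrictMono (Ack k a) :=
  (strictMono_ack_and_lt_ack hk a).1

theorem lt_ack (hk : 2 ≤ k) (a x : ℕ) : x < Ack k a x :=
  (strictMono_ack_and_lt_ack hk a).2 x

theorem exists_ge_ack_succ_eq (hk : 2 ≤ k) (a x : ℕ) :
    ∃ y, x ≤ y ∧ Ack k (a + 1) x = Ack k a y := by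
  obtain ⟨n, hn⟩ : ∃ n, k * (x + 1) = n + 1 :=
    Nat.exists_eq_add_one.2 (Nat.mul_pos (by lia) x.succ_pos)
  have iterate_strictMono : StrictMono fun n ↦ (Ack k a)^[n] 1 :=
    (strictMono_ack hk a).strictMono_iterate_of_lt_map (lt_ack hk a 1)
  refine ⟨(Ack k a)^[n] 1, ?_, ?_⟩
  · calc
      x ≤ n := by nlinarith
      _ ≤ (Ack k a)^[n] 1 := iterate_strictMono.le_apply
  · rw [ack_succ_eq_iterate_mul, hn, Function.iterate_succ_apply']

theorem exists_ge_ack_eq (hk : 2 ≤ k) {c a : ℕ} (hca : c ≤ a) (x : ℕ) :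
    ∃ y, x ≤ y ∧ Ack k a x = Ack k c y := by
  induction a, hca using Nat.le_induction generalizing x with
  | base => exact ⟨x, le_rfl, rfl⟩
  | succ a _ ih =>
    obtain ⟨y, hxy, hy⟩ := exists_ge_ack_succ_eq hk a x
    obtain ⟨z, hyz, hz⟩ := ih y
    exact ⟨z, hxy.trans hyz, hy.trans hz⟩

theorem ack_le_ack_of_index_le (hk : 2 ≤ k) {c a : ℕ} (hca : c ≤ a) (x : ℕ) :
    Ack k c x ≤ Ack k a x := by
  obtain ⟨y, hxy, hy⟩ := exists_ge_ack_eq hk hca x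
  exact hy ▸ (strictMono_ack hk c).monotone hxy

theorem ack_add_one_le_of_ack_lt (hk : 2 ≤ k) {c a b x : ℕ} (hca : c ≤ a)
    (h : Ack k c b < Ack k a x) : Ack k c (b + 1) ≤ Ack k a x := by
  obtain ⟨y, -, hy⟩ := exists_ge_ack_eq hk hca x
  rw [hy] at h ⊢
  exact (strictMono_ack hk c).monotone ((strictMono_ack hk c).lt_iff_lt.1 h)

end Ackermann

/-- One step of the sandwiching procedure for `m`: from the current sandwiching value `x` it
selects the index `a` and the argument `b`, and `Ack k a b` is the next sandwiching value. -/
structure IsSandwichStep (k m x a b : ℕ) : Prop where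
  idx_lo : Ack k a x ≤ m
  idx_hi : m < Ack k (a + 1) x
  arg_lo : Ack k a b ≤ m
  arg_hi : m < Ack k a (b + 1)

namespace IsSandwichStep

variable {k m x a b : ℕ}

theorem ack_le_ack (h : IsSandwichStep k m x a b) (hk : 2 ≤ k) : Ack k a x ≤ Ack k a b :=
  (strictMono_ack hk a).monotone <|
    Nat.lt_succ_iff.1 <| (strictMono_ack hk a).lt_iff_lt.1 <| h.idx_lo.trans_lt h.arg_hi

theorem of_mem_Ico (h : IsSandwichStep k m x a b) (hk : 2 ≤ k) {w : ℕ}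
    (hw : w ∈ Set.Ico (Ack k a b) (Ack k a (b + 1))) : IsSandwichStep k w x a b where
  idx_lo := (h.ack_le_ack hk).trans hw.1
  idx_hi := hw.2.trans_le <|
    ack_add_one_le_of_ack_lt hk a.le_succ (h.arg_lo.trans_lt h.idx_hi)
  arg_lo := hw.1
  arg_hi := hw.2

theorem next_index_lt (h : IsSandwichStep k m x a b) (hk : 2 ≤ k) {a' b' : ℕ}
    (h' : IsSandwichStep k m (Ack k a b) a' b') : a' < a := by
  by_contra! haa'
  have : m < m := calc
    m < Ack k a (b + 1) := h.arg_hi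
    _ ≤ Ack k a (Ack k a b) := (strictMono_ack hk a).monotone (lt_ack hk a b)
    _ ≤ Ack k a' (Ack k a b) := ack_le_ack_of_index_le hk haa' _
    _ ≤ m := h'.idx_lo
  exact this.false

theorem next_upper_bound_le (h : IsSandwichStep k m x a b) (hk : 2 ≤ k) {a' b' : ℕ}
    (h' : IsSandwichStep k m (Ack k a b) a' b') : Ack k a' (b' + 1) ≤ Ack k a (b + 1) :=
  ack_add_one_le_of_ack_lt hk (h.next_index_lt hk h').le (h'.arg_lo.trans_lt h.arg_hi)

end IsSandwichStep

namespace IsSandwich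

variable {k m n : ℕ} {a b ms : ℕ → ℕ}

theorem step (hs : IsSandwich k m n a b ms) {i : ℕ} (hi : i < n) :
    IsSandwichStep k m (ms i) (a (i + 1)) (b (i + 1)) :=
  ⟨hs.idx_lo i hi, hs.idx_hi i hi, hs.arg_lo i hi, hs.arg_hi i hi⟩

theorem of_step (ms_zero : ms 0 = 0)
    (step : ∀ i < n, IsSandwichStep k m (ms i) (a (i + 1)) (b (i + 1)))
    (ms_succ : ∀ i < n, ms (i + 1) = Ack k (a (i + 1)) (b (i + 1)))
    (halt : m < Ack k 0 (ms n)) : IsSandwich k m n a b ms where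
  ms_zero := ms_zero
  idx_lo i hi := (step i hi).idx_lo
  idx_hi i hi := (step i hi).idx_hi
  arg_lo i hi := (step i hi).arg_lo
  arg_hi i hi := (step i hi).arg_hi
  ms_succ := ms_succ
  halt := halt

theorem value_le_value (hs : IsSandwich k m n a b ms) (hk : 2 ≤ k) {i j : ℕ} (hij : i ≤ j)
    (hjn : j ≤ n) : ms i ≤ ms j := by
  induction j, hij using Nat.le_induction with
  | base => exact le_rfl
  | succ j _ ih =>
    calc
      ms i ≤ ms j := ih (by lia)
      _ ≤ Ack k (a (j + 1)) (ms j) := (lt_ack hk _ _).le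
      _ ≤ Ack k (a (j + 1)) (b (j + 1)) := (hs.step hjn).ack_le_ack hk
      _ = ms (j + 1) := (hs.ms_succ j hjn).symm

theorem upper_bound_le_upper_bound (hs : IsSandwich k m n a b ms) (hk : 2 ≤ k) {i j : ℕ}
    (hij : i ≤ j) (hjn : j < n) :
    Ack k (a (j + 1)) (b (j + 1) + 1) ≤ Ack k (a (i + 1)) (b (i + 1) + 1) := by
  induction j, hij using Nat.le_induction with
  | base => exact le_rfl
  | succ j _ ih =>
    have hj : j < n := by lia
    have next_step := hs.step hjn
    rw [hs.ms_succ j hj] at next_step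
    exact ((hs.step hj).next_upper_bound_le hk next_step).trans (ih hj)

theorem step_of_value_le_of_lt (hs : IsSandwich k m n a b ms) (hk : 2 ≤ k) {j w : ℕ}
    (hjn : j ≤ n) (hlo : ms j ≤ w) (hhi : w < Ack k (a j) (b j + 1)) {i : ℕ} (hij : i < j) :
    IsSandwichStep k w (ms i) (a (i + 1)) (b (i + 1)) := by
  obtain ⟨j, rfl⟩ : ∃ j', j = j' + 1 := Nat.exists_eq_add_one.2 (by lia)
  refine (hs.step (by lia)).of_mem_Ico hk ⟨?_, ?_⟩
  · rw [← hs.ms_succ i (by lia)]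
    exact (hs.value_le_value hk hij hjn).trans hlo
  · exact hhi.trans_le (hs.upper_bound_le_upper_bound hk (by lia) hjn)

theorem truncate_extend (hs : IsSandwich k m n a b ms) (hk : 2 ≤ k) {j w d e : ℕ}
    (hjn : j ≤ n) (hhi : 0 < j → w < Ack k (a j) (b j + 1))
    (hstep : IsSandwichStep k w (ms j) d e) (halt : w < Ack k 0 (Ack k d e)) :
    IsSandwich k w (j + 1) (Function.update a (j + 1) d) (Function.update b (j + 1) e)
      (Function.update ms (j + 1) (Ack k d e)) := by
  have value_le : ms j ≤ w := (lt_ack hk d _).le.trans hstep.idx_lo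
  refine of_step ?_ (fun i hi ↦ ?_) (fun i hi ↦ ?_) ?_
  · simpa using hs.ms_zero
  · rcases Nat.lt_succ_iff_lt_or_eq.1 hi with hij | rfl
    · simpa [hi.ne, hij.ne] using
        hs.step_of_value_le_of_lt hk hjn value_le (hhi (by lia)) hij
    · simpa using hstep
  · rcases Nat.lt_succ_iff_lt_or_eq.1 hi with hij | rfl
    · simpa [hij.ne] using hs.ms_succ i (by lia)
    · simp
  · simpa using halt

end IsSandwich

theorem stmt_4_general (k m n j d e c : ℕ) (a b ms : ℕ → ℕ) (hk : 2 ≤ k)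
    (hs : IsSandwich k m n a b ms) (hjn : j ≤ n)
    (hw1 : Ack k d (ms j) ≤ Ack k d e + c) (hw2 : Ack k d e + c < Ack k (d + 1) (ms j))
    (hw3 : 0 < j → Ack k d e + c < Ack k (a j) (b j + 1))
    (arg_hi : Ack k d e + c < Ack k d (e + 1)) (halt : Ack k d e + c < Ack k 0 (Ack k d e)) :
    NF k (Ack k d e + c) d e c ∧
      ∃ d' e' ws, IsSandwich k (Ack k d e + c) (j + 1) d' e' ws ∧
        (∀ i, 1 ≤ i → i ≤ j → d' i = a i ∧ e' i = b i) ∧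
        d' (j + 1) = d ∧ e' (j + 1) = e := by
  have hw := hs.truncate_extend hk hjn hw3 ⟨hw1, hw2, Nat.le_add_right _ _, arg_hi⟩ halt
  refine ⟨⟨rfl, j + 1, _, _, _, j.succ_pos, hw, by simp, by simp⟩,
    _, _, _, hw, ?_, by simp, by simp⟩
  intro i _ hij
  simp [(Nat.lt_succ_of_le hij).ne]

theorem stmt_4 (k m n j d e : ℕ) (a b ms : ℕ → ℕ) (hk : 2 ≤ k) (hn : 1 ≤ n)
    (hs : IsSandwich k m n a b ms) (hm : m = Ack k (a n) (b n)) (hjn : j ≤ n)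
    (hw1 : Ack k d (ms j) ≤ Ack k d e) (hw2 : Ack k d e < Ack k (d + 1) (ms j))
    (hw3 : 0 < j → Ack k d e < Ack k (a j) (b j + 1)) :
    NF k (Ack k d e) d e 0 ∧
      ∃ d' e' ws, IsSandwich k (Ack k d e) (j + 1) d' e' ws ∧
        (∀ i, 1 ≤ i → i ≤ j → d' i = a i ∧ e' i = b i) ∧
        d' (j + 1) = d ∧ e' (j + 1) = e :=
  stmt_4_general k m n j d e 0 a b ms hk hs hjn hw1 hw2 hw3
    (strictMono_ack hk d e.lt_succ_self) (lt_ack hk 0 _)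
end

section
/- If A_a b is in k-normal form (that is, the number A_a b satisfies A_a b ≡_k A_a b + 0) and 0 < p < k, then A_a b · p is in extended k-normal form, i.e., A_a b · p ≡_k A_a b + (A_a b · (p−1)) with A_a b · (p−1) expressible as A_a b · (p−1) + 0 where 0 ≤ A_a b · (p−1) arises as the quotient–remainder decomposition with quotient p and remainder 0. -/
/-- `SNF k m d p q` says that `m ≃_k d · p + q`, i.e. `m` has simplified
`k`-normal form `d · p + q`: `m ≡_k A_a b + c` for some `a`, `b`, `c` with
`d = A_a b`, `m = d * p + q` and `q < d`. -/
def SNF (k m d p q : ℕ) : Prop :=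
  ∃ a b c, NF k m a b c ∧ d = Ack k a b ∧ m = d * p + q ∧ q < d

/-!
Every value of the base-`k` Ackermann function is a power of `k`, so two values `d < e` satisfy
`d * k ≤ e`. Each strict upper bound in the definition of a sandwiching sequence is such a value;
hence the sandwiching sequence of `d = A_a b` also sandwiches every `m` with `d ≤ m < d * k`, and
in particular `m = d * p` for `0 < p < k`.
-/

section Ack

variable {k a b c d : ℕ}

theorem Ack.exists_eq_pow (k a b : ℕ) : ∃ x, Ack k a b = k ^ x := by
  induction a generalizing b with
  | zero => exact ⟨b, by rw [Ack]⟩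
  | succ a ih =>
    cases k with
    | zero => exact ⟨0, by simp [Ack]⟩
    | succ k =>
      rw [Ack, Function.iterate_succ_apply', Function.iterate_succ_apply']
      exact ih _

theorem Ack.pos (hk : 0 < k) : 0 < Ack k a b := by
  obtain ⟨x, hx⟩ := Ack.exists_eq_pow k a b
  exact hx ▸ Nat.pow_pos hk

theorem Ack.mul_base_le_of_lt (h : Ack k a b < Ack k c d) : Ack k a b * k ≤ Ack k c d := by
  obtain rfl | hk := k.eq_zero_or_pos
  · simp
  obtain ⟨x, hx⟩ := Ack.exists_eq_pow k a b
  obtain ⟨y, hy⟩ := Ack.exists_eq_pow k c d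
  rw [hx, hy] at h ⊢
  have hxy : x < y := (pow_right_mono₀ hk).reflect_lt h
  calc
    k ^ x * k = k ^ (x + 1) := (pow_succ k x).symm
    _ ≤ k ^ y := Nat.pow_le_pow_right hk hxy

end Ack

section NormalForm

variable {k m n a b c : ℕ} {as bs ms : ℕ → ℕ}

theorem IsSandwich.of_le_of_lt_mul_base (h : IsSandwich k (Ack k a b) n as bs ms)
    (hle : Ack k a b ≤ m) (hlt : m < Ack k a b * k) : IsSandwich k m n as bs ms where
  ms_zero := h.ms_zero
  idx_lo i hi := (h.idx_lo i hi).trans hle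
  idx_hi i hi := hlt.trans_le (Ack.mul_base_le_of_lt (h.idx_hi i hi))
  arg_lo i hi := (h.arg_lo i hi).trans hle
  arg_hi i hi := hlt.trans_le (Ack.mul_base_le_of_lt (h.arg_hi i hi))
  ms_succ := h.ms_succ
  halt := hlt.trans_le (Ack.mul_base_le_of_lt h.halt)

theorem NF.of_eq_add_of_lt_mul_base (h : NF k (Ack k a b) a b 0) (hm : m = Ack k a b + c)
    (hlt : m < Ack k a b * k) : NF k m a b c := by
  obtain ⟨-, n, as, bs, ms, hn, hs, ha, hb⟩ := h
  have hle : Ack k a b ≤ m := hm ▸ Nat.le_add_right _ c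
  exact ⟨hm, n, as, bs, ms, hn, hs.of_le_of_lt_mul_base hle hlt, ha, hb⟩

end NormalForm

theorem stmt_8 (k a b p : ℕ) (hk : 2 ≤ k) (hNF : NF k (Ack k a b) a b 0)
    (hp : 0 < p) (hpk : p < k) :
    NF k (Ack k a b * p) a b (Ack k a b * (p - 1)) ∧
      SNF k (Ack k a b * p) (Ack k a b) p 0 := by
  have hpos : 0 < Ack k a b := Ack.pos (two_pos.trans_le hk)
  have hsplit : Ack k a b * p = Ack k a b + Ack k a b * (p - 1) := by
    rw [add_comm, ← Nat.mul_succ, Nat.succ_eq_add_one, Nat.sub_add_cancel hp]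
  have hlt : Ack k a b * p < Ack k a b * k := Nat.mul_lt_mul_of_pos_left hpk hpos
  have hNFp : NF k (Ack k a b * p) a b (Ack k a b * (p - 1)) :=
    hNF.of_eq_add_of_lt_mul_base hsplit hlt
  exact ⟨hNFp, a, b, _, hNFp, rfl, (add_zero _).symm, hpos⟩
end
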